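/- Let T > 0 and let (H_n) be a sequence of set-valued maps from [0,T] to ℝ^m that is uniformly integrally bounded (there is an integrable g : [0,T] → ℝ₊ with sup_{x∈H_n(t)} ‖x‖ ≤ g(t) for all n and t). Let H be a set-valued map on [0,T] with nonempty images such that for every τ ∈ [0,T], limsup_n H_n(τ) ⊂ H(τ). If h_n is an integrable selection of H_n for each n, then along some subsequence (h_n) converges weakly in L¹([0,T], ℝ^m) to a function h with h(u) ∈ co(H(u)) (the convex hull of H(u)) for every u ∈ [0,T]; in particular, along this subsequence, ∫_0^τ h_n(u) du → ∫_0^τ h(u) du for every τ ∈ [0,T]. -/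

import Mathlib

open MeasureTheory Filter Topology Metric Set Pointwise

noncomputable section

/-- `ℝ^m` with the Euclidean norm. -/
abbrev Euc (m : ℕ) := EuclideanSpace ℝ (Fin m)

/-- A standard set-valued map `F : ℝ^m ⇒ ℝ^m`: nonempty compact convex values,
closed graph, and linear growth. -/
def IsStandardSVM {m : ℕ} (F : Euc m → Set (Euc m)) : Prop :=
  (∀ x, (F x).Nonempty ∧ IsCompact (F x) ∧ Convex ℝ (F x)) ∧
  IsClosed {p : Euc m × Euc m | p.2 ∈ F p.1} ∧
  ∃ c > 0, ∀ x, ∀ z ∈ F x, ‖z‖ ≤ c * (1 + ‖x‖)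

/-- A solution of the differential inclusion `dx/dt ∈ F x`: an absolutely continuous
curve `z : ℝ → ℝ^m` (written as the integral of a locally integrable derivative `h`)
with `h t ∈ F (z t)` for almost every `t`. -/
def IsSolution {m : ℕ} (F : Euc m → Set (Euc m)) (z : ℝ → Euc m) : Prop :=
  Continuous z ∧ ∃ h : ℝ → Euc m,
    (∀ a b : ℝ, IntervalIntegrable h volume a b) ∧
    (∀ᵐ t ∂volume, h t ∈ F (z t)) ∧
    ∀ t : ℝ, z t = z 0 + ∫ u in (0:ℝ)..t, h u

/-- `Φ_t(x)`: the set of points reached at time `t` by solutions starting at `x`. -/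
def PhiT {m : ℕ} (F : Euc m → Set (Euc m)) (t : ℝ) (x : Euc m) : Set (Euc m) :=
  {y | ∃ z : ℝ → Euc m, IsSolution F z ∧ z 0 = x ∧ z t = y}

/-- `ω_Φ(x) = ⋂_{t ≥ 0} closure (Φ_{[t,∞)}(x))`. -/
def omegaLimitSV {m : ℕ} (F : Euc m → Set (Euc m)) (x : Euc m) : Set (Euc m) :=
  ⋂ t ∈ Ici (0:ℝ), closure {y | ∃ s ≥ t, y ∈ PhiT F s x}

/-- An attractor for the set-valued dynamical system induced by `F`: a nonempty,
compact, invariant set admitting a neighborhood `U` with `Φ_t(U) ⊆ N^ε(A)` for all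
`t` large enough. -/
def IsAttractorSV {m : ℕ} (F : Euc m → Set (Euc m)) (A : Set (Euc m)) : Prop :=
  A.Nonempty ∧ IsCompact A ∧
  (∀ x ∈ A, ∃ z : ℝ → Euc m, IsSolution F z ∧ z 0 = x ∧ Set.range z ⊆ A) ∧
  ∃ U : Set (Euc m), IsOpen U ∧ A ⊆ U ∧
    ∀ ε > 0, ∃ tε > 0, ∀ t ≥ tε, ∀ x ∈ U, PhiT F t x ⊆ Metric.thickening ε A

/-- The basin of attraction `B(A) = {x | ω_Φ(x) ⊆ A}`. -/
def basinSV {m : ℕ} (F : Euc m → Set (Euc m)) (A : Set (Euc m)) : Set (Euc m) :=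
  {x | omegaLimitSV F x ⊆ A}

/-- The limit set `L(X) = ⋂_{t ≥ 0} closure {X s : s ≥ t}` of a path. -/
def limitSet {m : ℕ} (X : ℝ → Euc m) : Set (Euc m) :=
  ⋂ t ∈ Ici (0:ℝ), closure {y | ∃ s ≥ t, X s = y}

/-- `inf_{z ∈ S_Φ} sup_{u ∈ [0,T]} ‖z u - Y u‖`. -/
def distToSol {m : ℕ} (F : Euc m → Set (Euc m)) (Y : ℝ → Euc m) (T : ℝ) : ℝ :=
  sInf {d | ∃ z : ℝ → Euc m, IsSolution F z ∧ d = ⨆ u : Icc (0:ℝ) T, ‖z u - Y u‖}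

/-- Asymptotic pseudotrajectory of the set-valued dynamical system induced by `F`. -/
def IsAPT {m : ℕ} (F : Euc m → Set (Euc m)) (X : ℝ → Euc m) : Prop :=
  ∀ T > 0, Tendsto (fun t => distToSol F (fun u => X (t + u)) T) atTop (𝓝 0)

/-- A point `p` is attainable by the process `X`: for every `t > 0` and every
neighborhood `U` of `p`, `P(∃ s ≥ t, X s ∈ U) > 0`. -/
def Attainable {m : ℕ} {Ω : Type*} [MeasurableSpace Ω] (μ : Measure Ω)
    (X : ℝ → Ω → Euc m) (p : Euc m) : Prop :=
  ∀ t > 0, ∀ U ∈ 𝓝 p, 0 < μ {ω | ∃ s ≥ t, X s ω ∈ U}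

/-- `τ_n = γ_1 + ⋯ + γ_n`. -/
def tauOf (γ : ℕ → ℝ) (n : ℕ) : ℝ := ∑ i ∈ Finset.range n, γ (i + 1)

/-- `m(t) = sup {j | τ_j ≤ t}`. -/
def mIdx (γ : ℕ → ℝ) (t : ℝ) : ℕ := sSup {j | tauOf γ j ≤ t}

/-- Hypothesis H1: there is `w t α T` decreasing to `0` in `t` dominating the
conditional probability that `sup_{s ≥ t} inf_{z ∈ S_Φ} sup_{u ∈ [0,T]} ‖z u − X (s+u)‖ ≥ α`. -/
def HypH1 {m : ℕ} {Ω : Type*} [MeasurableSpace Ω] (μ : Measure Ω)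
    (𝓕 : ℝ → MeasurableSpace Ω) (F : Euc m → Set (Euc m)) (X : ℝ → Ω → Euc m) : Prop :=
  ∃ w : ℝ → ℝ → ℝ → ℝ,
    (∀ α > 0, ∀ T > 0, Antitone (fun t => w t α T) ∧ Tendsto (fun t => w t α T) atTop (𝓝 0)) ∧
    ∀ α > 0, ∀ T > 0, ∀ t : ℝ, ∀ᵐ ω ∂μ,
      (μ[Set.indicator {ω' | α ≤ ⨆ s : Ici t, distToSol F (fun u => X ((s : ℝ) + u) ω') T}
          (fun _ => (1:ℝ)) | 𝓕 t]) ω ≤ w t α T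

/-- `F^δ(x) = {y | ∃ z ∈ B(x,δ), dist(y, F z) < δ}`, with the convention `F^0 = F`. -/
def Fdelta {m : ℕ} (F : Euc m → Set (Euc m)) (δ : ℝ) (x : Euc m) : Set (Euc m) :=
  if δ = 0 then F x
  else {y | ∃ z : Euc m, dist z x < δ ∧ Metric.infDist y (F z) < δ}

/-- A `(δ(·), V(·))`-perturbed solution of `dx/dt ∈ F x`. -/
def IsPerturbedSolution {m : ℕ} (F : Euc m → Set (Euc m)) (δ : ℝ → ℝ) (V : ℝ → Euc m)
    (y : ℝ → Euc m) : Prop :=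
  Continuous y ∧ (∀ t > 0, 0 < δ t) ∧ Antitone δ ∧ Tendsto δ atTop (𝓝 0) ∧
  (∀ a b : ℝ, IntervalIntegrable V volume a b) ∧
  (∀ T > 0, Tendsto (fun t => ⨆ u : Icc (0:ℝ) T, ‖∫ r in t..(t + (u : ℝ)), V r‖)
    atTop (𝓝 0)) ∧
  ∃ h : ℝ → Euc m, (∀ a b : ℝ, IntervalIntegrable h volume a b) ∧
    (∀ᵐ t ∂(volume.restrict (Ioi (0:ℝ))), h t - V t ∈ Fdelta F (δ t) (y t)) ∧
    ∀ t ∈ Ici (0:ℝ), y t = y 0 + ∫ u in (0:ℝ)..t, h u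

/-- `Δ(n,T) = sup_{n < k ≤ m(τ_n + T)} ‖∑_{i=n}^{k-1} γ_{i+1} U_{i+1}‖`. -/
def DeltaNT {m : ℕ} {Ω : Type*} (γ : ℕ → ℝ) (U : ℕ → Ω → Euc m) (T : ℝ) (n : ℕ)
    (ω : Ω) : ℝ :=
  ⨆ k : {k : ℕ // n < k ∧ k ≤ mIdx γ (tauOf γ n + T)},
    ‖∑ i ∈ Finset.Ico n (k : ℕ), γ (i + 1) • U (i + 1) ω‖

/-- Condition (bruit2): the conditional probability that `sup_{m ≥ n} Δ(m,T) ≥ ε` is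
dominated by some `w n ε T` decreasing to `0` in `n`. -/
def Bruit2 {m : ℕ} {Ω : Type*} [MeasurableSpace Ω] (μ : Measure Ω)
    (𝓕 : ℕ → MeasurableSpace Ω) (γ : ℕ → ℝ) (U : ℕ → Ω → Euc m) : Prop :=
  ∃ w : ℕ → ℝ → ℝ → ℝ,
    (∀ ε > 0, ∀ T > 0, Antitone (fun n => w n ε T) ∧ Tendsto (fun n => w n ε T) atTop (𝓝 0)) ∧
    ∀ ε > 0, ∀ T > 0, ∀ n : ℕ, ∀ᵐ ω ∂μ,
      (μ[Set.indicator {ω' | ε ≤ ⨆ k : Ici n, DeltaNT γ U T (k : ℕ) ω'}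
          (fun _ => (1:ℝ)) | 𝓕 n]) ω ≤ w n ε T

/-- Topological `limsup` of a sequence of sets: points whose every neighborhood
meets infinitely many of the sets. -/
def setLimsup {X : Type*} [TopologicalSpace X] (A : ℕ → Set X) : Set X :=
  {y | ∀ U ∈ 𝓝 y, {n | (U ∩ A n).Nonempty}.Infinite}

/-- The operator `Λ^δ` on continuous paths `[0,T] → ℝ^m` (with `Λ^0 = Λ`). -/
def LambdaD {m : ℕ} (F : Euc m → Set (Euc m)) (T : ℝ) (hT : 0 ≤ T) (δ : ℝ)
    (z : C(Icc (0:ℝ) T, Euc m)) : Set C(Icc (0:ℝ) T, Euc m) :=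
  {y | ∃ h : ℝ → Euc m, IntervalIntegrable h volume 0 T ∧
    (∀ u : Icc (0:ℝ) T, h u ∈ Fdelta F δ (z u)) ∧
    ∀ τ : Icc (0:ℝ) T, y τ = z ⟨0, Set.left_mem_Icc.mpr hT⟩ + ∫ u in (0:ℝ)..(τ : ℝ), h u}

/-- `Φ^T(M) = closure (⋃_{s ∈ [0,T]} Φ_s(M))`. -/
def PhiTM {m : ℕ} (F : Euc m → Set (Euc m)) (T : ℝ) (M : Set (Euc m)) : Set (Euc m) :=
  closure (⋃ s ∈ Icc (0:ℝ) T, ⋃ x ∈ M, PhiT F s x)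

/-- `‖F‖ = sup_{x ∈ Φ^T(M)} sup_{y ∈ F x} ‖y‖`. -/
def normF {m : ℕ} (F : Euc m → Set (Euc m)) (T : ℝ) (M : Set (Euc m)) : ℝ :=
  sSup {r | ∃ x ∈ PhiTM F T M, ∃ y ∈ F x, r = ‖y‖}

/-- `K_C`: Lipschitz paths with constant `‖F‖ + C + 1` starting in `M`. -/
def KC {m : ℕ} (F : Euc m → Set (Euc m)) (T : ℝ) (hT : 0 ≤ T) (M : Set (Euc m))
    (C : ℝ) : Set C(Icc (0:ℝ) T, Euc m) :=
  {y | (∀ u v : Icc (0:ℝ) T, ‖y u - y v‖ ≤ (normF F T M + C + 1) * |(u : ℝ) - (v : ℝ)|) ∧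
    y ⟨0, Set.left_mem_Icc.mpr hT⟩ ∈ M}

/-- `S_{[0,T]}`: restrictions to `[0,T]` of solutions starting in `M`. -/
def SolRestrict {m : ℕ} (F : Euc m → Set (Euc m)) (T : ℝ) (M : Set (Euc m)) :
    Set C(Icc (0:ℝ) T, Euc m) :=
  {y | ∃ z : ℝ → Euc m, IsSolution F z ∧ z 0 ∈ M ∧ ∀ u : Icc (0:ℝ) T, y u = z u}

/-- A generalised stochastic approximation process relative to `F`. -/
def IsGSAP {m : ℕ} {Ω : Type*} [MeasurableSpace Ω] (μ : Measure Ω)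
    (F : Euc m → Set (Euc m)) (M : Set (Euc m)) (γ : ℕ → ℝ)
    (Fn : ℕ → Euc m → Set (Euc m)) (U : ℕ → Ω → Euc m) (x : ℕ → Ω → Euc m) : Prop :=
  (∀ n, 0 < γ n) ∧
  Tendsto (fun n => ∑ i ∈ Finset.range n, γ (i + 1)) atTop atTop ∧
  Tendsto γ atTop (𝓝 0) ∧
  (∃ C, ∀ n ω, ‖U n ω‖ ≤ C) ∧
  (∀ n ω, x (n + 1) ω - x n ω - γ (n + 1) • U (n + 1) ω ∈ γ (n + 1) • Fn n (x n ω)) ∧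
  (∀ T > 0, ∀ᵐ ω ∂μ, Tendsto
    (fun n => ⨆ k : {k : ℕ // ∑ i ∈ Finset.Ico n k, γ i ≤ T},
      ‖∑ i ∈ Finset.Ico n (k : ℕ), γ (i + 1) • U (i + 1) ω‖) atTop (𝓝 0)) ∧
  (∀ n ω, x n ω ∈ M) ∧
  (∀ δ > 0, ∃ n₀ : ℕ, ∀ n ≥ n₀, ∀ ω, Fn n (x n ω) ⊆ Fdelta F δ (x n ω))

/-!
Write `h_n = √g • X_n` with `‖X_n‖ ≤ √g`, so that `(X_n)` is bounded in the separable Hilbert space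
`L²` and a subsequence converges weakly there; multiplying by `√g ∈ L²` turns this into weak
convergence in `L¹`. Weak limits stay in closed convex sets, so the limit of `X_n` lies almost
everywhere in the closed convex hull of every tail of the sequence `(X_n u)`. In finite dimension
the intersection of these hulls is the convex hull of the cluster points of `(X_n u)`, and `√(g u)`
maps the latter to cluster points of `(h_n u)`, which belong to `limsup_n H_n(u)`.
-/

section ConvexHull

variable {E : Type*} [AddCommGroup E] [Module ℝ E]

lemma convexHull_range_eq_image_stdSimplex {ι : Type*} [Fintype ι] (z : ι → E) :
    convexHull ℝ (range z) = (fun w : ι → ℝ ↦ ∑ i, w i • z i) '' stdSimplex ℝ ι := by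
  classical
  rw [← convexHull_rangle_single_eq_stdSimplex]
  change _ = Fintype.linearCombination ℝ z '' _
  rw [LinearMap.image_convexHull, ← range_comp]
  congr 2
  ext i
  simp

lemma exists_fin_mem_convexHull_range [FiniteDimensional ℝ E] {K : Set E} {x : E}
    (hx : x ∈ convexHull ℝ K) :
    ∃ z : Fin (Module.finrank ℝ E + 1) → E, (∀ i, z i ∈ K) ∧ x ∈ convexHull ℝ (range z) := by
  rw [convexHull_eq_union] at hx
  simp only [mem_iUnion, exists_prop] at hx
  obtain ⟨t, htK, ht_indep, hxt⟩ := hx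
  have : Nonempty t := (convexHull_nonempty_iff.1 ⟨x, hxt⟩).to_subtype
  have hcard : Fintype.card t ≤ Fintype.card (Fin (Module.finrank ℝ E + 1)) := by
    rw [Fintype.card_fin]
    exact ht_indep.card_le_finrank_succ.trans (Nat.succ_le_succ (Submodule.finrank_le _))
  obtain ⟨e⟩ := Function.Embedding.nonempty_of_card_le hcard
  let z : Fin (Module.finrank ℝ E + 1) → t := Function.invFun e
  have hrange : range (Subtype.val ∘ z) = t := by
    rw [(Function.invFun_surjective e.injective).range_comp]
    exact Subtype.range_coe
  exact ⟨Subtype.val ∘ z, fun i ↦ htK (z i).2, hrange.symm ▸ hxt⟩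

lemma isCompact_convexHull [TopologicalSpace E] [ContinuousAdd E] [ContinuousSMul ℝ E]
    [FiniteDimensional ℝ E] {K : Set E} (hK : IsCompact K) : IsCompact (convexHull ℝ K) := by
  let combination (q : (Fin (Module.finrank ℝ E + 1) → ℝ) × (Fin (Module.finrank ℝ E + 1) → E)) :
    E := ∑ i, q.1 i • q.2 i
  have hull_eq : convexHull ℝ K = combination '' (stdSimplex ℝ _ ×ˢ univ.pi fun _ ↦ K) := by
    apply Subset.antisymm
    · intro x hx
      obtain ⟨z, hzK, hxz⟩ := exists_fin_mem_convexHull_range hx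
      rw [convexHull_range_eq_image_stdSimplex] at hxz
      obtain ⟨w, hw, rfl⟩ := hxz
      exact ⟨(w, z), ⟨hw, fun i _ ↦ hzK i⟩, rfl⟩
    · rintro _ ⟨⟨w, z⟩, ⟨⟨hw_nonneg, hw_sum⟩, hzK⟩, rfl⟩
      exact (convex_convexHull ℝ K).sum_mem (fun i _ ↦ hw_nonneg i) hw_sum
        fun i _ ↦ subset_convexHull ℝ K (hzK i trivial)
  rw [hull_eq]
  exact ((isCompact_stdSimplex ℝ _).prod (isCompact_univ_pi fun _ ↦ hK)).image (by fun_prop)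

end ConvexHull

section ClusterPoints

lemma isCompact_setOf_mapClusterPt {ι X : Type*} [PseudoMetricSpace X] [ProperSpace X]
    {l : Filter ι} {x : ι → X} (hx : Bornology.IsBounded (range x)) :
    IsCompact {z | MapClusterPt z l x} :=
  hx.isCompact_closure.of_isClosed_subset isClosed_setOfPred_clusterPt fun _ hz ↦
    isClosed_closure.mem_of_mapClusterPt hz
      (Eventually.of_forall fun n ↦ subset_closure (mem_range_self n))

lemma mem_convexHull_setOf_mapClusterPt {E : Type*} [NormedAddCommGroup E] [NormedSpace ℝ E]
    [FiniteDimensional ℝ E] {x : ℕ → E} {y : E} (hx : Bornology.IsBounded (range x))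
    (hy : ∀ N, y ∈ closedConvexHull ℝ (x '' Ici N)) :
    y ∈ convexHull ℝ {z | MapClusterPt z atTop x} := by
  have : ProperSpace E := FiniteDimensional.proper_real E
  by_contra hy_notMem
  obtain ⟨f, c, hf_lt, hc_lt⟩ := geometric_hahn_banach_closed_point (convex_convexHull ℝ _)
    (isCompact_convexHull (isCompact_setOf_mapClusterPt hx)).isClosed hy_notMem
  have hfreq : ∃ᶠ n in atTop, x n ∈ closure (range x) ∩ {z | c ≤ f z} := by
    refine frequently_atTop.2 fun N ↦ ?_
    by_contra! htail
    have htail_subset : closedConvexHull ℝ (x '' Ici N) ⊆ {z | f z ≤ c} := by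
      refine closedConvexHull_min ?_ (convex_halfSpace_le f.isLinear c)
        (isClosed_le f.continuous continuous_const)
      rintro _ ⟨n, hn, rfl⟩
      exact (not_le.1 fun hc : c ≤ f (x n) ↦ htail n hn ⟨subset_closure (mem_range_self n), hc⟩).le
    exact hc_lt.not_ge (htail_subset (hy N))
  obtain ⟨a, ha, ha_cluster⟩ := (hx.isCompact_closure.inter_right
    (isClosed_le continuous_const f.continuous)).exists_mapClusterPt_of_frequently hfreq
  exact (hf_lt a (subset_convexHull ℝ _ ha_cluster)).not_ge ha.2

lemma smul_mem_convexHull_setOf_mapClusterPt {ι E : Type*} [AddCommGroup E] [Module ℝ E]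
    [TopologicalSpace E] [ContinuousConstSMul ℝ E] {l : Filter ι} {x : ι → E} {y : E} (c : ℝ)
    (hy : y ∈ convexHull ℝ {z | MapClusterPt z l x}) :
    c • y ∈ convexHull ℝ {z | MapClusterPt z l fun n ↦ c • x n} := by
  have hsmul : c • {z | MapClusterPt z l x} ⊆ {z | MapClusterPt z l fun n ↦ c • x n} := by
    rintro _ ⟨z, hz, rfl⟩
    exact hz.continuousAt_comp (continuous_const_smul c).continuousAt
  refine convexHull_mono hsmul ?_
  rw [convexHull_smul]
  exact smul_mem_smul_set hy

end ClusterPoints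

lemma mapClusterPt_comp_mem_setLimsup {X : Type*} [TopologicalSpace X] {A : ℕ → Set X} {x : ℕ → X}
    {φ : ℕ → ℕ} {z : X} (hφ : StrictMono φ) (hx : ∀ n, x n ∈ A n)
    (hz : MapClusterPt z atTop (x ∘ φ)) : z ∈ setLimsup A := by
  intro U hU
  rw [← Nat.frequently_atTop_iff_infinite]
  exact ((hz.of_comp hφ.tendsto_atTop).frequently hU).mono fun n hn ↦ ⟨x n, hn, hx n⟩

section HilbertSpace

open RealInnerProductSpace

variable {V : Type*} [NormedAddCommGroup V] [InnerProductSpace ℝ V]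

lemma mem_of_tendsto_inner [CompleteSpace V] {ι : Type*} {l : Filter ι} [l.NeBot] {K : Set V}
    (hK_convex : Convex ℝ K) (hK_closed : IsClosed K) {x : ι → V} {y : V}
    (hxy : ∀ z, Tendsto (fun i ↦ ⟪x i, z⟫) l (𝓝 ⟪y, z⟫)) (hxK : ∀ᶠ i in l, x i ∈ K) : y ∈ K := by
  by_contra hy
  obtain ⟨f, c, hf_lt, hc_lt⟩ := geometric_hahn_banach_closed_point hK_convex hK_closed hy
  obtain ⟨z, rfl⟩ := (InnerProductSpace.toDual ℝ V).surjective f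
  simp only [InnerProductSpace.toDual_apply_apply] at hf_lt hc_lt
  rw [real_inner_comm] at hc_lt
  refine hc_lt.not_ge (le_of_tendsto (hxy z) (hxK.mono fun i hi ↦ ?_))
  rw [real_inner_comm]
  exact (hf_lt _ hi).le

lemma exists_strictMono_tendsto_inner_of_norm_le [CompleteSpace V]
    [TopologicalSpace.SeparableSpace V] {x : ℕ → V} {C : ℝ} (hx : ∀ n, ‖x n‖ ≤ C) :
    ∃ φ : ℕ → ℕ, StrictMono φ ∧ ∃ y : V,
      ∀ z, Tendsto (fun k ↦ ⟪x (φ k), z⟫) atTop (𝓝 ⟪y, z⟫) := by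
  obtain ⟨ℓ, -, φ, hφ, hlim⟩ := WeakDual.isSeqCompact_closedBall ℝ V 0 C
    (x := fun n ↦ StrongDual.toWeakDual (InnerProductSpace.toDual ℝ V (x n)))
    fun n ↦ by simpa using hx n
  obtain ⟨y, hy⟩ := (InnerProductSpace.toDual ℝ V).surjective (WeakDual.toStrongDual ℓ)
  refine ⟨φ, hφ, y, fun z ↦ ?_⟩
  have hyz : ⟪y, z⟫ = ℓ z := by
    rw [← InnerProductSpace.toDual_apply_apply, hy, WeakDual.toStrongDual_apply]
  rw [hyz]
  exact ((WeakDual.eval_continuous z).tendsto ℓ).comp hlim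

lemma tendsto_of_forall_tendsto_inner [FiniteDimensional ℝ V] {ι : Type*} {l : Filter ι}
    {x : ι → V} {y : V} (h : ∀ z, Tendsto (fun i ↦ ⟪z, x i⟫) l (𝓝 ⟪z, y⟫)) :
    Tendsto x l (𝓝 y) := by
  let b := stdOrthonormalBasis ℝ V
  rw [← b.sum_repr' y]
  refine (tendsto_finsetSum _ fun i _ ↦ (h (b i)).smul_const (b i)).congr fun i ↦ ?_
  exact b.sum_repr' (x i)

end HilbertSpace

section Lp

variable {α E : Type*} [MeasurableSpace α] {μ : Measure α} [NormedAddCommGroup E]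
  {p : ENNReal}

lemma isClosed_setOf_ae_mem [Fact (1 ≤ p)] {C : α → Set E} (hC : ∀ u, IsClosed (C u)) :
    IsClosed {f : Lp E p μ | ∀ᵐ u ∂μ, f u ∈ C u} := by
  refine isSeqClosed_iff_isClosed.1 fun f F hf hlim ↦ ?_
  obtain ⟨φ, -, hφ⟩ := (tendstoInMeasure_of_tendsto_Lp hlim).exists_seq_tendsto_ae
  filter_upwards [hφ, ae_all_iff.2 hf] with u hu hfu
  exact (hC u).mem_of_tendsto hu (Eventually.of_forall fun k ↦ hfu (φ k))

lemma convex_setOf_ae_mem [NormedSpace ℝ E] {C : α → Set E} (hC : ∀ u, Convex ℝ (C u)) :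
    Convex ℝ {f : Lp E p μ | ∀ᵐ u ∂μ, f u ∈ C u} := by
  intro f hf g hg a b ha hb hab
  filter_upwards [hf, hg, Lp.coeFn_add (a • f) (b • g), Lp.coeFn_smul a f, Lp.coeFn_smul b g]
    with u hfu hgu hadd hsmul_f hsmul_g
  rw [hadd, Pi.add_apply, hsmul_f, hsmul_g]
  exact hC u hfu hgu ha hb hab

end Lp

section WeakConvergence

open RealInnerProductSpace

variable {α E : Type*} [MeasurableSpace α] {μ : Measure α} [NormedAddCommGroup E]
  [InnerProductSpace ℝ E] {f : ℕ → α → E} {F : α → E}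

lemma inner_toLp_toLp {f g : α → E} (hf : MemLp f 2 μ) (hg : MemLp g 2 μ) :
    ⟪hf.toLp f, hg.toLp g⟫ = ∫ u, ⟪f u, g u⟫ ∂μ := by
  rw [L2.inner_def]
  apply integral_congr_ae
  filter_upwards [hf.coeFn_toLp, hg.coeFn_toLp] with u hfu hgu
  rw [hfu, hgu]

/-- Weak convergence of a sequence of functions, tested against `L^q` functions: `q = ⊤` gives
weak convergence in `L¹` and `q = 2` weak convergence in `L²`. The integrability of the `f k` and
of `F`, without which the integrals take the junk value `0`, is left to the statements using it. -/
def WeaklyTendsto (q : ENNReal) (μ : Measure α) (f : ℕ → α → E) (F : α → E) : Prop :=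
  ∀ g : α → E, MemLp g q μ →
    Tendsto (fun k ↦ ∫ u, ⟪f k u, g u⟫ ∂μ) atTop (𝓝 (∫ u, ⟪F u, g u⟫ ∂μ))

namespace WeaklyTendsto

lemma congr_ae {q : ENNReal} {f' : ℕ → α → E} {F' : α → E} (h : WeaklyTendsto q μ f F)
    (hf : ∀ k, f k =ᵐ[μ] f' k) (hF : F =ᵐ[μ] F') : WeaklyTendsto q μ f' F' := by
  have integral_inner_congr {G G' g : α → E} (hG : G =ᵐ[μ] G') :
      ∫ u, ⟪G u, g u⟫ ∂μ = ∫ u, ⟪G' u, g u⟫ ∂μ :=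
    integral_congr_ae (hG.mono fun u hu ↦ by simp only [hu])
  intro g hg
  simpa only [integral_inner_congr (hf _), integral_inner_congr hF] using h g hg

lemma smul_of_memLp_two {c : α → ℝ} (h : WeaklyTendsto 2 μ f F) (hc : MemLp c 2 μ) :
    WeaklyTendsto ⊤ μ (fun k u ↦ c u • f k u) (fun u ↦ c u • F u) := by
  intro g hg
  simpa only [Pi.smul_apply', real_inner_smul_left, real_inner_smul_right] using h _ (hg.smul hc)

lemma ae_mem [CompleteSpace E] {C : α → Set E} (h : WeaklyTendsto 2 μ f F)
    (hf : ∀ n, MemLp (f n) 2 μ) (hF : MemLp F 2 μ) (hC_convex : ∀ u, Convex ℝ (C u))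
    (hC_closed : ∀ u, IsClosed (C u)) (hfC : ∀ᶠ n in atTop, ∀ᵐ u ∂μ, f n u ∈ C u) :
    ∀ᵐ u ∂μ, F u ∈ C u := by
  have hlim (g : Lp E 2 μ) : Tendsto (fun n ↦ ⟪(hf n).toLp (f n), g⟫) atTop (𝓝 ⟪hF.toLp F, g⟫) := by
    rw [← Lp.toLp_coeFn g (Lp.memLp g)]
    simp only [inner_toLp_toLp]
    exact h g (Lp.memLp g)
  have hfC_toLp : ∀ᶠ n in atTop, ∀ᵐ u ∂μ, (hf n).toLp (f n) u ∈ C u := by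
    filter_upwards [hfC] with n hn
    filter_upwards [hn, (hf n).coeFn_toLp] with u hu hfu
    rwa [hfu]
  have hFC_toLp : ∀ᵐ u ∂μ, hF.toLp F u ∈ C u :=
    mem_of_tendsto_inner (K := {G : Lp E 2 μ | ∀ᵐ u ∂μ, G u ∈ C u})
      (convex_setOf_ae_mem hC_convex) (isClosed_setOf_ae_mem hC_closed) hlim hfC_toLp
  filter_upwards [hFC_toLp, hF.coeFn_toLp] with u hu hFu
  rwa [← hFu]

lemma ae_mem_convexHull_setOf_mapClusterPt [FiniteDimensional ℝ E] (h : WeaklyTendsto 2 μ f F)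
    (hf : ∀ n, MemLp (f n) 2 μ) (hF : MemLp F 2 μ)
    (hbdd : ∀ᵐ u ∂μ, Bornology.IsBounded (range (f · u))) :
    ∀ᵐ u ∂μ, F u ∈ convexHull ℝ {z | MapClusterPt z atTop (f · u)} := by
  have htail (N : ℕ) : ∀ᵐ u ∂μ, F u ∈ closedConvexHull ℝ ((f · u) '' Ici N) := by
    refine h.ae_mem hf hF (fun _ ↦ convex_closedConvexHull) (fun _ ↦ isClosed_closedConvexHull) ?_
    filter_upwards [eventually_ge_atTop N] with n hn
    exact ae_of_all μ fun u ↦ subset_closedConvexHull (mem_image_of_mem _ hn)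
  filter_upwards [hbdd, ae_all_iff.2 htail] with u hu hFu
  exact mem_convexHull_setOf_mapClusterPt hu hFu

lemma tendsto_integral [FiniteDimensional ℝ E] (h : WeaklyTendsto ⊤ μ f F)
    (hf : ∀ n, Integrable (f n) μ) (hF : Integrable F μ) {A : Set α} (hA : MeasurableSet A) :
    Tendsto (fun k ↦ ∫ u in A, f k u ∂μ) atTop (𝓝 (∫ u in A, F u ∂μ)) := by
  have inner_setIntegral {G : α → E} (hG : Integrable G μ) (z : E) :
      ∫ u, ⟪G u, A.indicator (fun _ ↦ z) u⟫ ∂μ = ⟪z, ∫ u in A, G u ∂μ⟫ := by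
    rw [← integral_inner hG.integrableOn, ← integral_indicator hA]
    congr 1 with u
    by_cases hu : u ∈ A <;> simp [hu, real_inner_comm]
  refine tendsto_of_forall_tendsto_inner fun z ↦ ?_
  simpa only [inner_setIntegral (hf _), inner_setIntegral hF] using
    h _ ((memLp_top_const z).indicator hA)

end WeaklyTendsto

variable [FiniteDimensional ℝ E] [IsSeparable μ]

lemma exists_weaklyTendsto_two_of_norm_le {s : α → ℝ} (hs : MemLp s 2 μ)
    (hf : ∀ n, AEStronglyMeasurable (f n) μ) (hbound : ∀ n, ∀ᵐ u ∂μ, ‖f n u‖ ≤ s u) :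
    ∃ φ : ℕ → ℕ, StrictMono φ ∧ ∃ F : α → E, MemLp F 2 μ ∧
      (∀ᵐ u ∂μ, F u ∈ convexHull ℝ {z | MapClusterPt z atTop fun k ↦ f (φ k) u}) ∧
      WeaklyTendsto 2 μ (fun k ↦ f (φ k)) F := by
  have : Fact ((2 : ENNReal) ≠ ⊤) := ⟨ENNReal.ofNat_ne_top⟩
  have hf_memLp (n : ℕ) : MemLp (f n) 2 μ := hs.mono' (hf n) (hbound n)
  have hnorm (n : ℕ) : ‖(hf_memLp n).toLp (f n)‖ ≤ ‖hs.toLp s‖ := by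
    refine Lp.norm_le_norm_of_ae_le ?_
    filter_upwards [(hf_memLp n).coeFn_toLp, hs.coeFn_toLp, hbound n] with u hfu hsu hu
    rw [hfu, hsu]
    exact hu.trans (Real.le_norm_self _)
  obtain ⟨φ, hφ, F, hlim⟩ := exists_strictMono_tendsto_inner_of_norm_le hnorm
  have hweak : WeaklyTendsto 2 μ (fun k ↦ f (φ k)) F := fun g hg ↦ by
    simpa only [← inner_toLp_toLp (hf_memLp _) hg, ← inner_toLp_toLp (Lp.memLp F) hg,
      Lp.toLp_coeFn] using hlim (hg.toLp g)
  refine ⟨φ, hφ, F, Lp.memLp F, ?_, hweak⟩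
  refine hweak.ae_mem_convexHull_setOf_mapClusterPt (fun k ↦ hf_memLp (φ k)) (Lp.memLp F) ?_
  filter_upwards [ae_all_iff.2 hbound] with u hu
  exact isBounded_iff_forall_norm_le.2 ⟨s u, forall_mem_range.2 fun k ↦ hu (φ k)⟩

lemma exists_weaklyTendsto_top_of_norm_le {g : α → ℝ} (hg : Integrable g μ)
    (hf : ∀ n, AEStronglyMeasurable (f n) μ) (hbound : ∀ n, ∀ᵐ u ∂μ, ‖f n u‖ ≤ g u) :
    ∃ φ : ℕ → ℕ, StrictMono φ ∧ ∃ F : α → E, Integrable F μ ∧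
      (∀ᵐ u ∂μ, F u ∈ convexHull ℝ {z | MapClusterPt z atTop fun k ↦ f (φ k) u}) ∧
      WeaklyTendsto ⊤ μ (fun k ↦ f (φ k)) F := by
  have hg_nonneg : ∀ᵐ u ∂μ, 0 ≤ g u := (hbound 0).mono fun u hu ↦ (norm_nonneg _).trans hu
  have hsqrt_aesm : AEStronglyMeasurable (fun u ↦ √(g u)) μ :=
    Real.continuous_sqrt.comp_aestronglyMeasurable hg.aestronglyMeasurable
  have hsqrt : MemLp (fun u ↦ √(g u)) 2 μ :=
    (memLp_two_iff_integrable_sq hsqrt_aesm).2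
      (hg.congr (hg_nonneg.mono fun u hu ↦ (Real.sq_sqrt hu).symm))
  obtain ⟨φ, hφ, X, hX, hX_mem, hweak⟩ := exists_weaklyTendsto_two_of_norm_le hsqrt
    (f := fun n u ↦ (√(g u))⁻¹ • f n u)
    (fun n ↦ hsqrt_aesm.inv₀.smul (hf n))
    (fun n ↦ (hbound n).mono fun u hu ↦ by
      rw [norm_smul, norm_inv, Real.norm_of_nonneg (Real.sqrt_nonneg _), inv_mul_eq_div]
      exact (div_le_div_of_nonneg_right hu (Real.sqrt_nonneg _)).trans_eq Real.div_sqrt)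
  have hsmul : ∀ᵐ u ∂μ, ∀ n, √(g u) • (√(g u))⁻¹ • f n u = f n u := by
    filter_upwards [ae_all_iff.2 hbound] with u hu n
    rcases le_or_gt (g u) 0 with hgu | hgu
    · rw [norm_le_zero_iff.1 ((hu n).trans hgu), smul_zero, smul_zero]
    · exact smul_inv_smul₀ (Real.sqrt_pos.2 hgu).ne' _
  refine ⟨φ, hφ, fun u ↦ √(g u) • X u, memLp_one_iff_integrable.1 (hX.smul hsqrt), ?_, ?_⟩
  · filter_upwards [hX_mem, hsmul] with u hXu hu
    simpa only [hu] using smul_mem_convexHull_setOf_mapClusterPt (√(g u)) hXu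
  · exact (hweak.smul_of_memLp_two hsqrt).congr_ae (fun k ↦ hsmul.mono fun u hu ↦ hu (φ k))
      (ae_eq_refl _)

end WeakConvergence

lemma exists_ae_eq_forall_mem {α E : Type*} [MeasurableSpace α] {μ : Measure α} {S : Set α}
    {C : α → Set E} {F : α → E} (hC : ∀ u ∈ S, (C u).Nonempty)
    (hF : ∀ᵐ u ∂μ.restrict S, F u ∈ C u) :
    ∃ G : α → E, F =ᵐ[μ.restrict S] G ∧ ∀ u ∈ S, G u ∈ C u := by
  have hG (u : α) : ∃ y, (u ∈ S → y ∈ C u) ∧ (F u ∈ C u → F u = y) := by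
    by_cases hFu : F u ∈ C u
    · exact ⟨F u, fun _ ↦ hFu, fun _ ↦ rfl⟩
    · by_cases hu : u ∈ S
      · exact (hC u hu).imp fun y hy ↦ ⟨fun _ ↦ hy, fun h ↦ (hFu h).elim⟩
      · exact ⟨F u, fun h ↦ (hu h).elim, fun _ ↦ rfl⟩
  choose G hG_mem hG_eq using hG
  exact ⟨G, hF.mono hG_eq, hG_mem⟩

theorem weak_limit_of_selections_convex_hull_general {α E : Type*} [MeasurableSpace α]
    [NormedAddCommGroup E] [InnerProductSpace ℝ E] [FiniteDimensional ℝ E] {μ : Measure α}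
    {S : Set α} [IsSeparable (μ.restrict S)] (hS : MeasurableSet S)
    (Hn : ℕ → α → Set E) (H : α → Set E)
    (hbound : ∃ g : α → ℝ, IntegrableOn g S μ ∧ ∀ n, ∀ u ∈ S, ∀ x ∈ Hn n u, ‖x‖ ≤ g u)
    (hlimsup : ∀ u ∈ S, setLimsup (fun n ↦ Hn n u) ⊆ H u) (hn : ℕ → α → E)
    (hsel : ∀ n, IntegrableOn (hn n) S μ ∧ ∀ u ∈ S, hn n u ∈ Hn n u) :
    ∃ φ : ℕ → ℕ, StrictMono φ ∧ ∃ h : α → E,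
      IntegrableOn h S μ ∧
      (∀ u ∈ S, h u ∈ convexHull ℝ (H u)) ∧
      WeaklyTendsto ⊤ (μ.restrict S) (fun k ↦ hn (φ k)) h ∧
      ∀ A ⊆ S, MeasurableSet A →
        Tendsto (fun k ↦ ∫ u in A, hn (φ k) u ∂μ) atTop (𝓝 (∫ u in A, h u ∂μ)) := by
  obtain ⟨g, hg, hHn⟩ := hbound
  have hnorm (n : ℕ) : ∀ u ∈ S, ‖hn n u‖ ≤ g u := fun u hu ↦ hHn n u hu _ ((hsel n).2 u hu)
  obtain ⟨φ, hφ, F, hF, hF_mem, hweak⟩ := exists_weaklyTendsto_top_of_norm_le hg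
    (fun n ↦ (hsel n).1.aestronglyMeasurable) (fun n ↦ ae_restrict_of_forall_mem hS (hnorm n))
  have hcluster : ∀ u ∈ S, {z | MapClusterPt z atTop fun k ↦ hn (φ k) u} ⊆ H u := fun u hu _ hz ↦
    hlimsup u hu (mapClusterPt_comp_mem_setLimsup hφ (fun n ↦ (hsel n).2 u hu) hz)
  have hH_nonempty : ∀ u ∈ S, (convexHull ℝ (H u)).Nonempty := fun u hu ↦ by
    have hmem (n : ℕ) : hn n u ∈ closedBall 0 (g u) := mem_closedBall_zero_iff.2 (hnorm n u hu)
    obtain ⟨z, -, hz⟩ := (isCompact_closedBall (0 : E) (g u)).exists_mapClusterPt_of_frequently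
      (l := atTop) (Frequently.of_forall fun k ↦ hmem (φ k))
    exact ⟨z, subset_convexHull ℝ _ (hcluster u hu hz)⟩
  obtain ⟨h, hFh, hh_mem⟩ := exists_ae_eq_forall_mem hH_nonempty
    (hF_mem.mp (ae_restrict_of_forall_mem hS fun u hu hFu ↦ convexHull_mono (hcluster u hu) hFu))
  have hh : IntegrableOn h S μ := hF.congr hFh
  have hweak_h : WeaklyTendsto ⊤ (μ.restrict S) (fun k ↦ hn (φ k)) h :=
    hweak.congr_ae (fun _ ↦ ae_eq_refl _) hFh
  refine ⟨φ, hφ, h, hh, hh_mem, hweak_h, fun A hAS hA ↦ ?_⟩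
  simpa only [Measure.restrict_restrict_of_subset hAS] using
    hweak_h.tendsto_integral (fun k ↦ (hsel (φ k)).1) hh hA

open RealInnerProductSpace in
/-- (Proposition `convsimple`, general case.) Without the convexity
assumption, the weak `L¹` limit `h` of a subsequence of integrable selections of the
`H_n` takes values in the convex hulls `co(H(u))`; in particular the primitives
converge pointwise. -/
theorem weak_limit_of_selections_convex_hull
    {m : ℕ} (T : ℝ) (hT : 0 < T)
    (Hn : ℕ → ℝ → Set (Euc m)) (H : ℝ → Set (Euc m))
    (hbound : ∃ g : ℝ → ℝ, IntegrableOn g (Icc (0:ℝ) T) volume ∧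
      ∀ (n : ℕ), ∀ t ∈ Icc (0:ℝ) T, ∀ x ∈ Hn n t, ‖x‖ ≤ g t)
    (hHne : ∀ τ ∈ Icc (0:ℝ) T, (H τ).Nonempty)
    (hlimsup : ∀ τ ∈ Icc (0:ℝ) T, setLimsup (fun n => Hn n τ) ⊆ H τ)
    (hn : ℕ → ℝ → Euc m)
    (hsel : ∀ n : ℕ, IntegrableOn (hn n) (Icc (0:ℝ) T) volume ∧
      ∀ u ∈ Icc (0:ℝ) T, hn n u ∈ Hn n u) :
    ∃ φ : ℕ → ℕ, StrictMono φ ∧ ∃ h : ℝ → Euc m,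
      IntegrableOn h (Icc (0:ℝ) T) volume ∧
      (∀ u ∈ Icc (0:ℝ) T, h u ∈ convexHull ℝ (H u)) ∧
      (∀ g : ℝ → Euc m, MemLp g ⊤ (volume.restrict (Icc (0:ℝ) T)) →
        Tendsto (fun k => ∫ u in Icc (0:ℝ) T, ⟪hn (φ k) u, g u⟫)
          atTop (𝓝 (∫ u in Icc (0:ℝ) T, ⟪h u, g u⟫))) ∧
      ∀ τ ∈ Icc (0:ℝ) T,
        Tendsto (fun k => ∫ u in (0:ℝ)..τ, hn (φ k) u) atTop
          (𝓝 (∫ u in (0:ℝ)..τ, h u)) := by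
  obtain ⟨φ, hφ, h, hh, hh_mem, hweak, hlim⟩ :=
    weak_limit_of_selections_convex_hull_general measurableSet_Icc Hn H hbound hlimsup hn hsel
  refine ⟨φ, hφ, h, hh, hh_mem, hweak, fun τ hτ ↦ ?_⟩
  simpa only [intervalIntegral.integral_of_le hτ.1] using
    hlim (Ioc 0 τ) (Ioc_subset_Icc_self.trans (Icc_subset_Icc_right hτ.2)) measurableSet_Ioc
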